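/- For every ε > 0 there exists r₀ such that for every integer r ≥ r₀ there exists n₀ such that for all n ≥ n₀, (1−ε)·r·n·ln(n) ≤ opt_weak,p,r(S_n) ≤ (1+ε)·r·n·ln(n). In other words, lim_{r→∞} lim_{n→∞} opt_weak,p,r(S_n)/(r·n·ln n) = 1. -/

import Mathlib

/-- `GuessForce ok V m` means: in the mistake-bound game with weak (yes/no) reinforcement
where queries have type `Q`, guesses have type `A`, and `ok q g f` says that guess `g` is a
correct answer to query `q` when the hidden target is `f`, an (adaptive) adversary whose
answers must stay consistent with some member of the current version space `V` can force
every deterministic learner to be answered "no" at least `m` times.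
At each step the adversary chooses a query `q` and, depending on the learner's guess `g`,
either answers "no" (`c g = true`, one more mistake, continuing from the consistent
functions for which the guess is wrong) or answers "yes" (`c g = false`, continuing from the
consistent functions for which the guess is correct). -/
inductive GuessForce {α Q A : Type*} (ok : Q → A → α → Prop) : Set α → ℕ → Prop where
  | zero (V : Set α) : V.Nonempty → GuessForce ok V 0
  | step (V : Set α) (m : ℕ) (q : Q) (c : A → Bool)
      (hne : ∀ g : A, (if c g then {f ∈ V | ¬ ok q g f} else {f ∈ V | ok q g f}).Nonempty)
      (h : ∀ g : A, GuessForce ok (if c g then {f ∈ V | ¬ ok q g f} else {f ∈ V | ok q g f})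
        (if c g then m else m + 1)) :
      GuessForce ok V (m + 1)

/-- `opt_weak,p,r(F)`: the relative position model. In each round the adversary chooses a set
of `r` distinct inputs (given by `q.2`) and one further input `q.1` not among them, and the
learner guesses the relative position (in `{1,…,r+1}`) of the value of the target at `q.1`
among the values at all `r+1` chosen inputs; weak reinforcement. -/
noncomputable def optRPos (n r : ℕ) (F : Set (Equiv.Perm (Fin n))) : ℕ :=
  sSup {m | GuessForce
    (fun (q : {q : Fin n × (Fin r → Fin n) // Function.Injective q.2 ∧ ∀ i, q.2 i ≠ q.1})
         (g : ℕ) f =>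
      g = (Finset.univ.filter (fun i => f (q.1.2 i) < f q.1.1)).card + 1) F m}

/-! Upper bound: the `r + 1` possible answers to a query cover the version space, so by guessing the
most popular one the learner shrinks it by the factor `r / (r + 1)` with every mistake. Starting
from `n!` permutations this allows at most `(r + 1) * log n!` mistakes.

Lower bound: the adversary fixes the relative order of `δ * n` inputs, the pivots, and answers "no"
to every guess. Each remaining input lies in an unknown gap, directly above one of the pivots.
Comparing it with `r` pivots that split its candidate gaps into `r + 1` almost equal classes, the
learner's guess rules out a single class, that is, about a fraction `1 / (r + 1)` of the candidates.
Any choice of gaps is realised by some permutation, so the remaining inputs do not interact and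
each of them costs the learner about `r * log n` mistakes. -/

open scoped Finset

namespace GuessForce

variable {α Q A : Type*} {ok : Q → A → α → Prop} {V W : Set α} {m r : ℕ}

theorem nonempty [Nonempty A] (h : GuessForce ok V m) : V.Nonempty := by
  cases h with
  | zero _ hV => exact hV
  | step _ m q c hne _ =>
    obtain ⟨f, hf⟩ := hne (Classical.arbitrary A)
    split_ifs at hf
    exacts [⟨f, hf.1⟩, ⟨f, hf.1⟩]

theorem mono (h : GuessForce ok V m) (hVW : V ⊆ W) : GuessForce ok W m := by
  induction h generalizing W with
  | zero V hV => exact .zero W (hV.mono hVW)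
  | step V m q c hne _ ih =>
    have hsub (g : A) : (if c g then {f ∈ V | ¬ ok q g f} else {f ∈ V | ok q g f}) ⊆
        (if c g then {f ∈ W | ¬ ok q g f} else {f ∈ W | ok q g f}) := by
      split_ifs
      exacts [fun f hf => ⟨hVW hf.1, hf.2⟩, fun f hf => ⟨hVW hf.1, hf.2⟩]
    exact .step W m q c (fun g => (hne g).mono (hsub g)) fun g => ih g (hsub g)

theorem succ_of_forall_no [Nonempty A] (q : Q)
    (h : ∀ g, GuessForce ok {f ∈ V | ¬ ok q g f} m) : GuessForce ok V (m + 1) :=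
  .step V m q (fun _ => true) (fun g => by simpa using (h g).nonempty) fun g => by simpa using h g

end GuessForce

section UpperBound

variable {α Q A : Type*} [Finite α] {V : Set α} {m r : ℕ}

theorem exists_succ_mul_ncard_sep_not_le (p : A → α → Prop) (G : Finset A) (hG : #G = r + 1)
    (hp : ∀ f ∈ V, ∃ g ∈ G, p g f) :
    ∃ g, (r + 1) * {f ∈ V | ¬ p g f}.ncard ≤ r * V.ncard := by
  have hcover : V ⊆ ⋃ g ∈ G, {f ∈ V | p g f} := fun f hf =>
    let ⟨_, hg, hgf⟩ := hp f hf
    Set.mem_biUnion hg ⟨hf, hgf⟩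
  have hsum : ∑ _g ∈ G, V.ncard ≤ ∑ g ∈ G, (r + 1) * {f ∈ V | p g f}.ncard := by
    rw [Finset.sum_const, hG, smul_eq_mul, ← Finset.mul_sum]
    exact Nat.mul_le_mul_left _
      ((Set.ncard_le_ncard hcover).trans (Finset.set_ncard_biUnion_le G _))
  obtain ⟨g, -, hg⟩ := Finset.exists_le_of_sum_le (Finset.card_pos.1 (by omega)) hsum
  have hsplit : {f ∈ V | p g f}.ncard + {f ∈ V | ¬ p g f}.ncard = V.ncard :=
    Set.ncard_inter_add_ncard_sdiff_eq_ncard V {f | p g f}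
  exact ⟨g, by nlinarith⟩

namespace GuessForce

variable {ok : Q → A → α → Prop}

theorem succ_pow_le_pow_mul_ncard (G : Finset A) (hG : #G = r + 1)
    (hok : ∀ q f, ∃ g ∈ G, ok q g f) (h : GuessForce ok V m) :
    (r + 1) ^ m ≤ r ^ m * V.ncard := by
  induction h with
  | zero V hV =>
    rw [pow_zero, pow_zero, one_mul]
    exact (Set.ncard_pos V.toFinite).2 hV
  | step V m q c _ _ ih =>
    obtain ⟨g, hg⟩ := exists_succ_mul_ncard_sep_not_le (V := V) (ok q) G hG fun f _ => hok q f
    have ih := ih g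
    split_ifs at ih
    · calc (r + 1) ^ (m + 1) = (r + 1) ^ m * (r + 1) := pow_succ _ _
        _ ≤ r ^ m * {f ∈ V | ¬ ok q g f}.ncard * (r + 1) := by gcongr
        _ = r ^ m * ((r + 1) * {f ∈ V | ¬ ok q g f}.ncard) := by ring
        _ ≤ r ^ m * (r * V.ncard) := by gcongr
        _ = r ^ (m + 1) * V.ncard := by ring
    · exact ih.trans (Nat.mul_le_mul_left _ (Set.ncard_le_ncard (Set.sep_subset _ _)))

end GuessForce

theorem cast_le_mul_log_of_succ_pow_le {N : ℕ} (h : (r + 1) ^ m ≤ r ^ m * N) :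
    (m : ℝ) ≤ (r + 1) * Real.log N := by
  have hr : (0 : ℝ) < r + 1 := by positivity
  have hN : (0 : ℝ) < N := by
    rcases N.eq_zero_or_pos with rfl | hN
    · exact absurd h (by simp)
    · exact_mod_cast hN
  have hstep : (r : ℝ) ≤ (r + 1) * Real.exp (-(1 / (r + 1))) :=
    calc (r : ℝ) = (r + 1) * (1 - 1 / (r + 1)) := by field_simp; ring
      _ ≤ (r + 1) * Real.exp (-(1 / (r + 1))) := by gcongr; exact Real.one_sub_le_exp_neg _
  have hexp : Real.exp (m / (r + 1)) ≤ N := by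
    have hpow : ((r : ℝ) + 1) ^ m * 1 ≤ (r + 1) ^ m * (Real.exp (-(m / (r + 1))) * N) :=
      calc ((r : ℝ) + 1) ^ m * 1 ≤ r ^ m * N := by rw [mul_one]; exact_mod_cast h
        _ ≤ ((r + 1) * Real.exp (-(1 / (r + 1)))) ^ m * N := by gcongr
        _ = (r + 1) ^ m * (Real.exp (-(m / (r + 1))) * N) := by
          rw [mul_pow, ← Real.exp_nat_mul, mul_assoc]
          ring_nf
    have := le_of_mul_le_mul_left hpow (by positivity)
    rwa [Real.exp_neg, inv_mul_eq_div, one_le_div (Real.exp_pos _)] at this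
  rwa [← Real.le_log_iff_exp_le hN, div_le_iff₀' hr] at hexp

theorem GuessForce.cast_le_mul_log_ncard {ok : Q → A → α → Prop} (G : Finset A) (hG : #G = r + 1)
    (hok : ∀ q f, ∃ g ∈ G, ok q g f) (h : GuessForce ok V m) :
    (m : ℝ) ≤ (r + 1) * Real.log V.ncard :=
  cast_le_mul_log_of_succ_pow_le (h.succ_pow_le_pow_mul_ncard G hG hok)

end UpperBound

section RelativePosition

variable {n r m : ℕ}

/-- A query of the relative position model: an input and `r` distinct inputs different from it. -/
abbrev RelPosQuery (n r : ℕ) : Type :=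
  {q : Fin n × (Fin r → Fin n) // Function.Injective q.2 ∧ ∀ i, q.2 i ≠ q.1}

/-- `IsRelPos q g f`: the guess `g` is the relative position, counted from `1`, of the value of `f`
at `q.1.1` among its values at all the inputs of the query `q`. -/
def IsRelPos (q : RelPosQuery n r) (g : ℕ) (f : Equiv.Perm (Fin n)) : Prop :=
  g = #{i | f (q.1.2 i) < f q.1.1} + 1

theorem exists_mem_Icc_isRelPos (q : RelPosQuery n r) (f : Equiv.Perm (Fin n)) :
    ∃ g ∈ Finset.Icc 1 (r + 1), IsRelPos q g f :=
  ⟨_, Finset.mem_Icc.2 ⟨Nat.le_add_left _ _, Nat.succ_le_succ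
    ((Finset.card_le_univ _).trans_eq (Fintype.card_fin r))⟩, rfl⟩

theorem floor_mem_upperBounds_guessForce_isRelPos (F : Set (Equiv.Perm (Fin n))) :
    ⌊(r + 1) * Real.log F.ncard⌋₊ ∈
      upperBounds {m | GuessForce (IsRelPos (n := n) (r := r)) F m} := fun _ h =>
  Nat.le_floor (h.cast_le_mul_log_ncard (Finset.Icc 1 (r + 1)) (by simp) exists_mem_Icc_isRelPos)

theorem GuessForce.le_optRPos {F : Set (Equiv.Perm (Fin n))}
    (h : GuessForce (IsRelPos (n := n) (r := r)) F m) : m ≤ optRPos n r F :=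
  le_csSup ⟨_, floor_mem_upperBounds_guessForce_isRelPos F⟩ h

theorem optRPos_le_mul_log_ncard (n r : ℕ) (F : Set (Equiv.Perm (Fin n))) :
    (optRPos n r F : ℝ) ≤ (r + 1) * Real.log F.ncard :=
  (Nat.cast_le.2 (csSup_le' (floor_mem_upperBounds_guessForce_isRelPos F))).trans
    (Nat.floor_le (mul_nonneg (by positivity) (Real.log_natCast_nonneg _)))

theorem optRPos_univ_le (n r : ℕ) :
    (optRPos n r Set.univ : ℝ) ≤ (r + 1) * (n * Real.log n) := by
  have hcard : (Set.univ : Set (Equiv.Perm (Fin n))).ncard = n.factorial := by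
    rw [Set.ncard_univ, Nat.card_perm, Nat.card_fin]
  have hlog : Real.log n.factorial ≤ n * Real.log n := by
    rw [← Real.log_pow]
    exact Real.log_le_log (mod_cast n.factorial_pos) (mod_cast n.factorial_le_pow)
  calc (optRPos n r Set.univ : ℝ) ≤ (r + 1) * Real.log n.factorial :=
        hcard ▸ optRPos_le_mul_log_ncard n r Set.univ
    _ ≤ (r + 1) * (n * Real.log n) := by gcongr

end RelativePosition

section BalancedCuts

theorem succ_mul_ceilDiv_le (a r : ℕ) : (r + 1) * (a ⌈/⌉ (r + 1)) ≤ a + r :=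
  Nat.mul_div_le _ _

theorem succ_mul_card_filter_div_eq_le (r N a : ℕ) :
    (r + 1) * #{j : Fin N | j * (r + 1) / N = a} ≤ N + r := by
  rcases N.eq_zero_or_pos with rfl | hN
  · simp
  have hcard : #{j : Fin N | j * (r + 1) / N = a} ≤
      #(Finset.Ico (a * N ⌈/⌉ (r + 1)) ((a + 1) * N ⌈/⌉ (r + 1))) := by
    refine Finset.card_le_card_of_injOn Fin.val (fun j hj => ?_) Fin.val_injective.injOn
    have hj' := (Nat.div_eq_iff hN).1 (Finset.mem_filter.1 hj).2
    rw [Finset.mem_coe, Finset.mem_Ico, ceilDiv_le_iff_le_mul r.succ_pos, ← not_le,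
      ceilDiv_le_iff_le_mul r.succ_pos, mul_comm _ (j : ℕ), add_one_mul]
    rw [Nat.succ_eq_add_one]
    omega
  rw [Nat.card_Ico] at hcard
  have hle := succ_mul_ceilDiv_le ((a + 1) * N) r
  have hge : a * N ≤ (r + 1) * (a * N ⌈/⌉ (r + 1)) := le_smul_ceilDiv r.succ_pos
  calc (r + 1) * #{j : Fin N | j * (r + 1) / N = a}
      ≤ (r + 1) * ((a + 1) * N ⌈/⌉ (r + 1)) - (r + 1) * (a * N ⌈/⌉ (r + 1)) := by
        rw [← Nat.mul_sub]
        exact Nat.mul_le_mul_left _ hcard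
    _ ≤ (a + 1) * N + r - a * N := tsub_le_tsub hle hge
    _ = N + r := by rw [add_one_mul]; omega

/-- The element of index `j` among `N` gets the class `⌊j * (r + 1) / N⌋`, so class `i + 1` starts
at the index `⌈(i + 1) * N / (r + 1)⌉`. -/
theorem exists_balanced_cuts {α : Type*} [LinearOrder α] {r : ℕ} (P : Finset α)
    (hP : r + 1 ≤ #P) :
    ∃ c : Fin r → α, Function.Injective c ∧ (∀ i, c i ∈ P) ∧
      ∀ a, (r + 1) * #{p ∈ P | #{i | c i ≤ p} = a} ≤ #P + r := by
  let start (i : Fin r) : ℕ := (i + 1) * #P ⌈/⌉ (r + 1)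
  have start_le_iff (i : Fin r) (j : ℕ) : start i ≤ j ↔ (i : ℕ) < j * (r + 1) / #P := by
    rw [ceilDiv_le_iff_le_mul r.succ_pos, Nat.lt_iff_add_one_le,
      Nat.le_div_iff_mul_le (by omega), mul_comm j]
  have start_lt (i : Fin r) : start i < #P := by
    have := succ_mul_ceilDiv_le ((i + 1) * #P) r
    have := Nat.mul_le_mul_right #P i.2
    nlinarith
  have start_strictMono : StrictMono start := fun i j hij => by
    have hi := succ_mul_ceilDiv_le ((i + 1) * #P) r
    have hj : (j + 1) * #P ≤ (r + 1) * start j := le_smul_ceilDiv r.succ_pos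
    have := Nat.mul_le_mul_right #P (Nat.succ_le_succ (Fin.lt_def.1 hij))
    refine lt_of_mul_lt_mul_left (a := r + 1) ?_ (Nat.zero_le _)
    nlinarith
  let e := P.orderEmbOfFin rfl
  refine ⟨fun i => e ⟨start i, start_lt i⟩, fun i j hij => ?_,
    fun i => P.orderEmbOfFin_mem rfl _, fun a => ?_⟩
  · exact start_strictMono.injective (Fin.mk.inj_iff.1 (e.injective hij))
  · have hclass (j : Fin #P) : #{i | e ⟨start i, start_lt i⟩ ≤ e j} = j * (r + 1) / #P := by
      simp only [e.le_iff_le, Fin.le_def, start_le_iff, Fin.card_filter_val_lt]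
      refine min_eq_right (Nat.lt_succ_iff.1 (Nat.div_lt_of_lt_mul ?_))
      exact Nat.mul_lt_mul_of_pos_right j.2 r.succ_pos
    calc (r + 1) * #{p ∈ P | #{i | e ⟨start i, start_lt i⟩ ≤ p} = a}
        = (r + 1) * #{p ∈ Finset.univ.map e.toEmbedding |
            #{i | e ⟨start i, start_lt i⟩ ≤ p} = a} := by rw [P.map_orderEmbOfFin_univ rfl]
      _ = (r + 1) * #{j : Fin #P | j * (r + 1) / #P = a} := by
        rw [Finset.filter_map, Finset.card_map]
        simp only [Function.comp_def, RelEmbedding.coe_toEmbedding, hclass]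
      _ ≤ #P + r := succ_mul_card_filter_div_eq_le r #P a

end BalancedCuts

section Gaps

variable {n r m t : ℕ} {I : Finset (Fin n)}

theorem exists_perm_lt_iff {α : Type*} [LinearOrder α] {h : Fin n → α}
    (hh : Function.Injective h) :
    ∃ f : Equiv.Perm (Fin n), ∀ i j, f i < f j ↔ h i < h j := by
  have hmono : StrictMono (h ∘ Tuple.sort h) :=
    (Tuple.monotone_sort h).strictMono_of_injective (hh.comp (Tuple.sort h).injective)
  refine ⟨(Tuple.sort h)⁻¹, fun i j => ?_⟩
  rw [← hmono.lt_iff_lt]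
  simp

/-- The assignment `γ` of gaps to the inputs outside the set `I` of pivots describes `f`: the values
of `f` at the pivots below `γ x`, and at `γ x` itself, are smaller than `f x`, those at the pivots
above `γ x` are larger. Thus `x` lies directly above the pivot `γ x`. -/
def IsGapMap (I : Finset (Fin n)) (f : Equiv.Perm (Fin n)) (γ : Fin n → Fin n) : Prop :=
  ∀ i ∈ I, ∀ x ∉ I, (f i < f x ↔ i ≤ γ x)

theorem exists_isGapMap (I : Finset (Fin n)) (γ : Fin n → Fin n) :
    ∃ f : Equiv.Perm (Fin n), IsGapMap I f γ := by
  let key (i : Fin n) : Fin n ×ₗ (Bool ×ₗ Fin n) :=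
    toLex (if i ∈ I then i else γ i, toLex (decide (i ∉ I), i))
  have hkey : Function.Injective key := fun i j h => (Prod.ext_iff.1 (Prod.ext_iff.1 h).2).2
  obtain ⟨f, hf⟩ := exists_perm_lt_iff hkey
  refine ⟨f, fun i hi x hx => ?_⟩
  simp [hf, key, Prod.Lex.toLex_lt_toLex, hi, hx, le_iff_lt_or_eq]

/-- The version space of the adversary: the permutations in which every input `x` outside the set
`I` of pivots lies in a gap from `P x`. The sets `P x` with `x ∈ I` are only required to be
nonempty. -/
def gapSpace (I : Finset (Fin n)) (P : Fin n → Finset (Fin n)) : Set (Equiv.Perm (Fin n)) :=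
  {f | ∃ γ, IsGapMap I f γ ∧ ∀ x, γ x ∈ P x}

theorem gapSpace_nonempty {P : Fin n → Finset (Fin n)} (hP : ∀ x, (P x).Nonempty) :
    (gapSpace I P).Nonempty := by
  choose γ hγ using hP
  obtain ⟨f, hf⟩ := exists_isGapMap I γ
  exact ⟨f, γ, hf, hγ⟩

theorem exists_query_gapSpace_update_subset {P : Fin n → Finset (Fin n)} {x : Fin n}
    (hx : x ∉ I) (hPI : P x ⊆ I) (hcard : r + 1 ≤ #(P x)) :
    ∃ q : RelPosQuery n r, ∀ g, ∃ C ⊆ P x, r * (#(P x) + r) ≤ (r + 1) * (#C + r) ∧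
      gapSpace I (Function.update P x C) ⊆ {f ∈ gapSpace I P | ¬ IsRelPos q g f} := by
  obtain ⟨c, hc, hcP, hbal⟩ := exists_balanced_cuts (P x) hcard
  refine ⟨⟨(x, c), hc, fun i => ne_of_mem_of_not_mem (hPI (hcP i)) hx⟩, fun g => ?_⟩
  refine ⟨{p ∈ P x | #{i | c i ≤ p} ≠ g - 1}, Finset.filter_subset _ _, ?_, ?_⟩
  · have hsplit := Finset.card_filter_add_card_filter_not (s := P x)
      fun p => #{i | c i ≤ p} = g - 1
    have := hbal (g - 1)
    simp only [ne_eq]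
    nlinarith
  · rintro f ⟨γ, hf, hγ⟩
    obtain ⟨hγx, hne⟩ : γ x ∈ P x ∧ #{i | c i ≤ γ x} ≠ g - 1 := by simpa using hγ x
    refine ⟨⟨γ, hf, fun y => ?_⟩, fun hg => hne ?_⟩
    · rcases eq_or_ne y x with rfl | hy
      · exact hγx
      · simpa [hy] using hγ y
    · have hrank : g = #{i | c i ≤ γ x} + 1 := by
        simpa only [IsRelPos, hf _ (hPI (hcP _)) x hx] using hg
      rw [hrank, Nat.add_sub_cancel]

theorem le_of_mul_succ_pow_le_pow_mul {b c : ℕ} (h : b * (r + 1) ^ t ≤ r ^ t * c) : b ≤ c := by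
  refine le_of_mul_le_mul_right (a := (r + 1) ^ t) ?_ (by positivity)
  calc b * (r + 1) ^ t ≤ r ^ t * c := h
    _ ≤ (r + 1) ^ t * c := by gcongr; exact r.le_succ
    _ = c * (r + 1) ^ t := mul_comm _ _

theorem mul_succ_pow_le_pow_mul_of_succ {b c d : ℕ}
    (h : b * (r + 1) ^ (t + 1) ≤ r ^ (t + 1) * c) (hcd : r * c ≤ (r + 1) * d) :
    b * (r + 1) ^ t ≤ r ^ t * d := by
  refine le_of_mul_le_mul_right (a := r + 1) ?_ r.succ_pos
  calc b * (r + 1) ^ t * (r + 1) = b * (r + 1) ^ (t + 1) := by ring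
    _ ≤ r ^ (t + 1) * c := h
    _ = r ^ t * (r * c) := by ring
    _ ≤ r ^ t * ((r + 1) * d) := by gcongr
    _ = r ^ t * d * (r + 1) := by ring

/-- Each wrong guess about `x` multiplies `#(P x) + r` by at least `r / (r + 1)`, and `x` can be
queried as long as this quantity is at least `2 * r + 1`. -/
theorem guessForce_gapSpace_add {P : Fin n → Finset (Fin n)} {x : Fin n} (hx : x ∉ I)
    (hPI : P x ⊆ I) (ht : (2 * r + 1) * (r + 1) ^ t ≤ r ^ t * (#(P x) + r))
    (h : ∀ C ⊆ P x, C.Nonempty →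
      GuessForce (IsRelPos (n := n) (r := r)) (gapSpace I (Function.update P x C)) m) :
    GuessForce (IsRelPos (n := n) (r := r)) (gapSpace I P) (m + t) := by
  have hcard : r + 1 ≤ #(P x) := by
    have := le_of_mul_succ_pow_le_pow_mul ht
    omega
  induction t generalizing P with
  | zero => simpa using h (P x) subset_rfl (Finset.card_pos.1 (by omega))
  | succ t ih =>
    obtain ⟨q, hq⟩ := exists_query_gapSpace_update_subset hx hPI hcard
    refine GuessForce.succ_of_forall_no q fun g => ?_
    obtain ⟨C, hC, hCcard, hCsub⟩ := hq g
    have htC := mul_succ_pow_le_pow_mul_of_succ ht hCcard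
    have hcardC := le_of_mul_succ_pow_le_pow_mul htC
    have hforce : GuessForce (IsRelPos (n := n) (r := r))
        (gapSpace I (Function.update P x C)) (m + t) := by
      apply ih <;> simp only [Function.update_self, Function.update_idem]
      · exact hC.trans hPI
      · exact htC
      · exact fun D hD => h D (hD.trans hC)
      · omega
    exact hforce.mono hCsub

theorem guessForce_gapSpace_card_mul (hI : (2 * r + 1) * (r + 1) ^ t ≤ r ^ t * (#I + r))
    {X : Finset (Fin n)} (hX : Disjoint X I) {P : Fin n → Finset (Fin n)}
    (hP : ∀ x, (P x).Nonempty) (hPX : ∀ x ∈ X, P x = I) :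
    GuessForce (IsRelPos (n := n) (r := r)) (gapSpace I P) (#X * t) := by
  induction X using Finset.induction generalizing P with
  | empty => simpa using .zero _ (gapSpace_nonempty hP)
  | insert x X hxX ih =>
    obtain ⟨hxI, hXI⟩ := Finset.disjoint_insert_left.1 hX
    have hPx : P x = I := hPX x (Finset.mem_insert_self x X)
    rw [Finset.card_insert_of_notMem hxX, add_one_mul]
    refine guessForce_gapSpace_add hxI hPx.subset (hPx ▸ hI) fun C _ hC => ih hXI ?_ ?_
    · exact Function.forall_update_iff P (fun _ s => s.Nonempty) |>.2 ⟨hC, fun y _ => hP y⟩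
    · intro y hy
      rw [Function.update_of_ne (ne_of_mem_of_not_mem hy hxX)]
      exact hPX y (Finset.mem_insert_of_mem hy)

theorem mul_le_optRPos_univ {k : ℕ} (hk : k ≤ n)
    (h : (2 * r + 1) * (r + 1) ^ t ≤ r ^ t * (k + r)) :
    (n - k) * t ≤ optRPos n r Set.univ := by
  have hk0 : 0 < k := by
    have := le_of_mul_succ_pow_le_pow_mul h
    omega
  obtain ⟨I, -, rfl⟩ := Finset.exists_subset_card_eq (s := (Finset.univ : Finset (Fin n)))
    (by simpa using hk)
  have hforce := guessForce_gapSpace_card_mul h (disjoint_compl_left (a := I)) (P := fun _ => I)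
    (fun _ => Finset.card_pos.1 hk0) fun _ _ => rfl
  rw [Finset.card_compl, Fintype.card_fin] at hforce
  exact (hforce.mono (Set.subset_univ _)).le_optRPos

end Gaps
section Asymptotics

open Filter Topology

theorem sub_mul_log_sub_one_le_optRPos_univ {n r k : ℕ} (hr : 0 < r) (hk : 2 * r + 1 ≤ k)
    (hkn : k ≤ n) :
    ((n : ℝ) - k) * (r * Real.log (k / (2 * r + 1)) - 1) ≤ optRPos n r Set.univ := by
  have hr' : (0 : ℝ) < r := Nat.cast_pos.2 hr
  have hk' : (2 * r + 1 : ℝ) ≤ k := mod_cast hk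
  have hc : (0 : ℝ) < k / (2 * r + 1) := div_pos (by linarith) (by positivity)
  set L := Real.log (k / (2 * r + 1))
  have hL : 0 ≤ L := Real.log_nonneg ((one_le_div (by positivity)).2 hk')
  set t : ℕ := ⌊r * L⌋₊
  have hpow : ((r + 1) / r : ℝ) ^ t ≤ k / (2 * r + 1) :=
    calc ((r + 1) / r : ℝ) ^ t = (1 / r + 1) ^ t := by field_simp; ring
      _ ≤ Real.exp (1 / r) ^ t := by gcongr; exact Real.add_one_le_exp _
      _ = Real.exp (t / r) := by rw [← Real.exp_nat_mul, mul_one_div]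
      _ ≤ Real.exp L := by
        gcongr
        exact (div_le_iff₀' hr').2 (Nat.floor_le (by positivity))
      _ = k / (2 * r + 1) := Real.exp_log hc
  have ht : (2 * r + 1) * (r + 1) ^ t ≤ r ^ t * (k + r) := by
    rw [div_pow, div_le_div_iff₀ (by positivity) (by positivity)] at hpow
    have : ((2 * r + 1) * (r + 1) ^ t : ℝ) ≤ r ^ t * (k + r) := by
      nlinarith [pow_pos hr' t]
    exact_mod_cast this
  calc ((n : ℝ) - k) * (r * L - 1) ≤ (n - k) * t := by
        have := Nat.lt_floor_add_one (r * L)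
        have : (k : ℝ) ≤ n := mod_cast hkn
        gcongr
        linarith
    _ ≤ optRPos n r Set.univ := by
      rw [← Nat.cast_sub hkn]
      exact_mod_cast mul_le_optRPos_univ hkn ht

theorem tendsto_log_natCast_atTop : Tendsto (fun n : ℕ => Real.log n) atTop atTop :=
  Real.tendsto_log_atTop.comp tendsto_natCast_atTop_atTop

theorem tendsto_floor_mul_natCast_div {δ : ℝ} (hδ : 0 ≤ δ) :
    Tendsto (fun n : ℕ => (⌊δ * n⌋₊ / n : ℝ)) atTop (𝓝 δ) :=
  (tendsto_nat_floor_mul_div_atTop hδ).comp tendsto_natCast_atTop_atTop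

theorem tendsto_floor_mul_natCast_atTop {δ : ℝ} (hδ : 0 < δ) :
    Tendsto (fun n : ℕ => ⌊δ * n⌋₊) atTop atTop :=
  tendsto_nat_floor_atTop.comp (tendsto_natCast_atTop_atTop.const_mul_atTop hδ)

theorem tendsto_log_floor_mul_div_log {δ c : ℝ} (hδ : 0 < δ) (hc : 0 < c) :
    Tendsto (fun n : ℕ => Real.log (⌊δ * n⌋₊ / c) / Real.log n) atTop (𝓝 1) := by
  have hdiff : Tendsto (fun n : ℕ => Real.log (⌊δ * n⌋₊ / n / c)) atTop (𝓝 (Real.log (δ / c))) :=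
    ((tendsto_floor_mul_natCast_div hδ.le).div_const c).log (by positivity)
  have hlim := (hdiff.div_atTop tendsto_log_natCast_atTop).add_const 1
  rw [zero_add] at hlim
  refine hlim.congr' ?_
  filter_upwards [tendsto_log_natCast_atTop.eventually_gt_atTop 0,
    (tendsto_floor_mul_natCast_atTop hδ).eventually_gt_atTop 0, eventually_gt_atTop 0]
    with n hlog hfloor hn
  have hn' : (0 : ℝ) < n := Nat.cast_pos.2 hn
  have hfloor' : (0 : ℝ) < ⌊δ * n⌋₊ := Nat.cast_pos.2 hfloor
  rw [div_right_comm, Real.log_div (div_pos hfloor' hc).ne' hn'.ne']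
  field_simp
  ring

theorem tendsto_sub_mul_log_sub_one_div {r δ c : ℝ} (hr : 0 < r) (hδ : 0 < δ) (hc : 0 < c) :
    Tendsto (fun n : ℕ => (n - ⌊δ * n⌋₊) * (r * Real.log (⌊δ * n⌋₊ / c) - 1) /
      (r * n * Real.log n)) atTop (𝓝 (1 - δ)) := by
  have hlim := ((tendsto_floor_mul_natCast_div hδ.le).const_sub 1).mul
    ((tendsto_log_floor_mul_div_log hδ hc).sub
      (tendsto_const_nhds.div_atTop (tendsto_log_natCast_atTop.const_mul_atTop hr) (a := 1)))
  rw [sub_zero, mul_one] at hlim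
  refine hlim.congr' ?_
  filter_upwards [tendsto_log_natCast_atTop.eventually_gt_atTop 0, eventually_ne_atTop 0]
    with n hlog hn
  have : (n : ℝ) ≠ 0 := Nat.cast_ne_zero.2 hn
  field_simp

theorem eventually_mul_log_le_optRPos_univ {r : ℕ} (hr : 0 < r) {c : ℝ} (hc : c < 1) :
    ∀ᶠ n : ℕ in atTop, c * r * n * Real.log n ≤ optRPos n r Set.univ := by
  obtain ⟨d, hd, hd1⟩ := exists_between (max_lt hc one_pos)
  obtain ⟨hcd, hd0⟩ := max_lt_iff.1 hd
  have hδ : 0 < 1 - d := sub_pos.2 hd1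
  have hr' : (0 : ℝ) < r := Nat.cast_pos.2 hr
  have hlim := tendsto_sub_mul_log_sub_one_div (c := 2 * r + 1) hr' hδ (by positivity)
  filter_upwards [hlim.eventually_const_lt (show c < 1 - (1 - d) by rwa [sub_sub_cancel]),
    (tendsto_floor_mul_natCast_atTop hδ).eventually_ge_atTop (2 * r + 1),
    tendsto_log_natCast_atTop.eventually_gt_atTop 0, eventually_gt_atTop 0]
    with n hn hfloor hlog hn0
  have hfloor_le : ⌊(1 - d) * n⌋₊ ≤ n :=
    Nat.floor_le_of_le (mul_le_of_le_one_left n.cast_nonneg (by linarith))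
  rw [lt_div_iff₀ (by positivity)] at hn
  calc c * r * n * Real.log n = c * (r * n * Real.log n) := by ring
    _ ≤ (n - ⌊(1 - d) * n⌋₊) * (r * Real.log (⌊(1 - d) * n⌋₊ / (2 * r + 1)) - 1) := hn.le
    _ ≤ optRPos n r Set.univ := sub_mul_log_sub_one_le_optRPos_univ hr hfloor hfloor_le

end Asymptotics

/-- For every `ε > 0` there exists `r₀` such that for every integer
`r ≥ r₀` there exists `n₀` such that for all `n ≥ n₀`,
`(1−ε)·r·n·ln n ≤ opt_weak,p,r(S_n) ≤ (1+ε)·r·n·ln n`; i.e.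
`lim_{r→∞} lim_{n→∞} opt_weak,p,r(S_n)/(r·n·ln n) = 1`. -/
theorem stmt19 (ε : ℝ) (hε : 0 < ε) :
    ∃ r₀ : ℕ, ∀ r : ℕ, r₀ ≤ r → ∃ n₀ : ℕ, ∀ n : ℕ, n₀ ≤ n →
      (1 - ε) * r * n * Real.log n
          ≤ (optRPos n r (Set.univ : Set (Equiv.Perm (Fin n))) : ℝ) ∧
      (optRPos n r (Set.univ : Set (Equiv.Perm (Fin n))) : ℝ)
          ≤ (1 + ε) * r * n * Real.log n := by
  refine ⟨⌈1 / ε⌉₊, fun r hr => ?_⟩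
  have hεr : 1 ≤ ε * r := (div_le_iff₀' hε).1 (Nat.ceil_le.1 hr)
  have hr0 : 0 < r := Nat.pos_of_ne_zero fun h => by norm_num [h] at hεr
  obtain ⟨n₀, hn₀⟩ := Filter.eventually_atTop.1
    (eventually_mul_log_le_optRPos_univ hr0 (sub_lt_self 1 hε))
  refine ⟨n₀, fun n hn => ⟨hn₀ n hn, ?_⟩⟩
  calc (optRPos n r Set.univ : ℝ) ≤ (r + 1) * (n * Real.log n) := optRPos_univ_le n r
    _ ≤ (r + ε * r) * (n * Real.log n) := by
      have := Real.log_natCast_nonneg n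
      gcongr
    _ = (1 + ε) * r * n * Real.log n := by ring
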